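/- arXiv:2310.16157 — 3 statements merged into one kernel-verified Lean document; each statement's English description precedes it below -/
import Mathlib

section
/- Let x : F be a feature of the item, i.e. x ∈ A t₀ for some t₀ : T, and let P' = Function.update P x 0 be the ratings obtained by muting x (setting its rating to 0) while keeping all other ratings unchanged. If P x < 0 (x attacks the recommendation), then muting x strictly increases the predicted rating: r̂(P') > r̂(P). (Weak monotonicity, attack case, Proposition 2 of CA-FATA.) -/
/-- CA-FATA predicted rating. -/
noncomputable def predictedRating {T F : Type*} [Fintype T]
    (π : T → ℝ) (A : T → Finset F) (P : F → ℝ) : ℝ :=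
  ∑ t : T, π t * ((∑ a ∈ A t, P a) / ((A t).card : ℝ))

/-- Weak monotonicity, attack case (Proposition 2 of CA-FATA): if a feature `x`
of the item has negative rating (`x` attacks the recommendation), then muting
`x` (setting its rating to 0) strictly increases the predicted rating. -/
theorem weak_monotonicity_attack {T F : Type*} [Fintype T] [Nonempty T]
    [DecidableEq F]
    (π : T → ℝ) (A : T → Finset F) (P : F → ℝ)
    (hAne : ∀ t, (A t).Nonempty)
    (hπ : ∀ t, 0 < π t)
    (x : F) (t₀ : T) (hx : x ∈ A t₀)
    (hP : P x < 0) :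
    predictedRating π A (Function.update P x 0) > predictedRating π A P := by
  have hle : ∀ a, P a ≤ Function.update P x 0 a := by
    intro a
    by_cases h : a = x
    · subst h
      simpa using hP.le
    · simp [Function.update_of_ne h]
  have hlt : P x < Function.update P x 0 x := by simpa using hP
  have hc : ∀ t, (0 : ℝ) < ((A t).card : ℝ) := fun t => by
    exact_mod_cast (hAne t).card_pos
  unfold predictedRating
  refine Finset.sum_lt_sum (fun t _ => ?_) ⟨t₀, Finset.mem_univ _, ?_⟩
  · exact mul_le_mul_of_nonneg_left
      (div_le_div_of_nonneg_right (Finset.sum_le_sum fun a _ => hle a) (hc t).le) (hπ t).le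
  · exact mul_lt_mul_of_pos_left
      (div_lt_div_of_pos_right (Finset.sum_lt_sum (fun a _ => hle a) ⟨x, hx, hlt⟩) (hc t₀)) (hπ t₀)
end

section
/- Let x : F be a feature of the item, i.e. x ∈ A t₀ for some t₀ : T, and let P' = Function.update P x 0 be the ratings obtained by muting x (setting its rating to 0) while keeping all other ratings unchanged. If P x > 0 (x supports the recommendation), then muting x strictly decreases the predicted rating: r̂(P') < r̂(P). (Weak monotonicity, support case, Proposition 2 of CA-FATA.) -/
/-- Weak monotonicity, support case (Proposition 2 of CA-FATA): if a feature `x`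
of the item has positive rating (`x` supports the recommendation), then muting
`x` (setting its rating to 0) strictly decreases the predicted rating. -/
theorem weak_monotonicity_support {T F : Type*} [Fintype T] [Nonempty T]
    [DecidableEq F]
    (π : T → ℝ) (A : T → Finset F) (P : F → ℝ)
    (hAne : ∀ t, (A t).Nonempty)
    (hπ : ∀ t, 0 < π t)
    (x : F) (t₀ : T) (hx : x ∈ A t₀)
    (hP : P x > 0) :
    predictedRating π A (Function.update P x 0) < predictedRating π A P := by
  have hle : ∀ a, Function.update P x 0 a ≤ P a := by
    intro a
    by_cases h : a = x
    · subst h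
      simpa using hP.le
    · simp [Function.update_of_ne h]
  unfold predictedRating
  apply Finset.sum_lt_sum
  · intro t _
    exact mul_le_mul_of_nonneg_left
      (div_le_div_of_nonneg_right (Finset.sum_le_sum fun a _ => hle a) (Nat.cast_nonneg _))
      (hπ t).le
  · refine ⟨t₀, Finset.mem_univ _, ?_⟩
    have hc : (0 : ℝ) < ((A t₀).card : ℝ) := Nat.cast_pos.mpr (hAne t₀).card_pos
    refine mul_lt_mul_of_pos_left (div_lt_div_of_pos_right ?_ hc) (hπ t₀)
    exact Finset.sum_lt_sum (fun a _ => hle a) ⟨x, hx, by simpa using hP⟩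
end

section
/- Let x : F be a feature of the item, i.e. x ∈ A t₀ for some t₀ : T, and let P' : F → ℝ be ratings with P' a = P a for every a ≠ x. If the rating of x is strictly decreased, P' x < P x, then the predicted rating of the item strictly decreases: r̂(P') < r̂(P). (Corollary 1 of CA-FATA, decreasing direction.) -/
/-- Corollary 1 of CA-FATA, decreasing direction: strictly decreasing the
rating of one feature `x` of the item (keeping the other ratings fixed)
strictly decreases the predicted rating of the item. -/
theorem corollary_decrease {T F : Type*} [Fintype T] [Nonempty T]
    (π : T → ℝ) (A : T → Finset F) (P P' : F → ℝ)
    (hAne : ∀ t, (A t).Nonempty)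
    (hπ : ∀ t, 0 < π t)
    (x : F) (t₀ : T) (hx : x ∈ A t₀)
    (hagree : ∀ a : F, a ≠ x → P' a = P a)
    (hdec : P' x < P x) :
    predictedRating π A P' < predictedRating π A P := by
  have hle : ∀ a, P' a ≤ P a := by
    intro a
    by_cases h : a = x
    · rw [h]; exact hdec.le
    · exact (hagree a h).le
  unfold predictedRating
  refine Finset.sum_lt_sum (fun t _ => ?_) ⟨t₀, Finset.mem_univ _, ?_⟩
  · exact mul_le_mul_of_nonneg_left
      (div_le_div_of_nonneg_right (Finset.sum_le_sum fun a _ => hle a) (Nat.cast_nonneg _))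
      (hπ t).le
  · have hc : (0 : ℝ) < ((A t₀).card : ℝ) := Nat.cast_pos.mpr (hAne t₀).card_pos
    exact mul_lt_mul_of_pos_left
      (div_lt_div_of_pos_right (Finset.sum_lt_sum (fun a _ => hle a) ⟨x, hx, hdec⟩) hc)
      (hπ t₀)
end
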